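/- Let (V, ω) be a symplectic vector space over ℝ and L₁, L₂, L₃, L₄ four Lagrangian subspaces. Then the Wall signatures satisfy the cocycle identity σ(V; L₁, L₂, L₃) + σ(V; L₁, L₃, L₄) = σ(V; L₁, L₂, L₄) + σ(V; L₂, L₃, L₄). -/

import Mathlib

/-- A subspace `L` of a symplectic vector space `(V, ω)` is Lagrangian if it equals
its own `ω`-orthogonal complement. -/
def IsLagrangian {V : Type*} [AddCommGroup V] [Module ℝ V]
    (ω : LinearMap.BilinForm ℝ V) (L : Submodule ℝ V) : Prop :=
  ω.orthogonal L = L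

/-- The Wall pairing `Ψ(x, y) = ω(x, y₂)`, where `y + y₂ + y₃ = 0` with `y₂ ∈ L₂`,
`y₃ ∈ L₃` is some choice of decomposition (the value is independent of the choice
when the `Lᵢ` are Lagrangian and `x ∈ L₂ + L₃`). -/
noncomputable def wallPsi {V : Type*} [AddCommGroup V] [Module ℝ V]
    (ω : LinearMap.BilinForm ℝ V) (L₂ L₃ : Submodule ℝ V) (x y : V) : ℝ := by
  classical
  exact if h : ∃ q : V × V, q.1 ∈ L₂ ∧ q.2 ∈ L₃ ∧ y + q.1 + q.2 = 0 then ω x h.choose.1 else 0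

/-- The maximal dimension of a subspace of `L₁ ⊓ (L₂ ⊔ L₃)` on which the Wall form is
positive definite. -/
noncomputable def wallPosIndex {V : Type*} [AddCommGroup V] [Module ℝ V]
    (ω : LinearMap.BilinForm ℝ V) (L₁ L₂ L₃ : Submodule ℝ V) : ℕ :=
  sSup {n : ℕ | ∃ W : Submodule ℝ V, W ≤ L₁ ⊓ (L₂ ⊔ L₃) ∧ Module.finrank ℝ W = n ∧
    ∀ x ∈ W, x ≠ 0 → 0 < wallPsi ω L₂ L₃ x x}

/-- The maximal dimension of a subspace of `L₁ ⊓ (L₂ ⊔ L₃)` on which the Wall form is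
negative definite. -/
noncomputable def wallNegIndex {V : Type*} [AddCommGroup V] [Module ℝ V]
    (ω : LinearMap.BilinForm ℝ V) (L₁ L₂ L₃ : Submodule ℝ V) : ℕ :=
  sSup {n : ℕ | ∃ W : Submodule ℝ V, W ≤ L₁ ⊓ (L₂ ⊔ L₃) ∧ Module.finrank ℝ W = n ∧
    ∀ x ∈ W, x ≠ 0 → wallPsi ω L₂ L₃ x x < 0}

/-- `σ(V; L₁, L₂, L₃)`: the signature of the Wall form `Ψ` on `L₁ ⊓ (L₂ + L₃)`
(number of positive minus number of negative eigenvalues). -/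
noncomputable def wallSignature {V : Type*} [AddCommGroup V] [Module ℝ V]
    (ω : LinearMap.BilinForm ℝ V) (L₁ L₂ L₃ : Submodule ℝ V) : ℤ :=
  (wallPosIndex ω L₁ L₂ L₃ : ℤ) - (wallNegIndex ω L₁ L₂ L₃ : ℤ)

namespace WallAux

section General

variable {E E' : Type*} [AddCommGroup E] [Module ℝ E] [AddCommGroup E'] [Module ℝ E']
  [FiniteDimensional ℝ E'] [FiniteDimensional ℝ E]

/-- A space mapping linearly to a positive cone has dimension at most `sigPos`. -/
theorem finrank_le_sigPos {W : Type*} [AddCommGroup W] [Module ℝ W]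
    (Q : QuadraticForm ℝ E) (g : W →ₗ[ℝ] E)
    (h : ∀ x, x ≠ 0 → 0 < Q (g x)) : Module.finrank ℝ W ≤ (sigPos Q) := by
  have hinj : Function.Injective g := by
    rw [injective_iff_map_eq_zero]
    intro x hx
    by_contra hne
    have := h x hne
    simp [hx] at this
  rw [← LinearMap.finrank_range_of_inj hinj]
  apply le_sigPos_of_posDef
  rintro ⟨_, x, rfl⟩ hx
  apply h
  rintro rfl
  simp at hx

theorem sigPos_le_of_map (Q : QuadraticForm ℝ E) (Q' : QuadraticForm ℝ E') (f : E →ₗ[ℝ] E')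
    (h : ∀ x, Q' (f x) = Q x) : (sigPos Q) ≤ (sigPos Q') := by
  obtain ⟨W, hW, hpos⟩ := exists_finrank_eq_sigPos_and_posDef Q
  rw [← hW]
  apply finrank_le_sigPos Q' (f ∘ₗ W.subtype)
  intro x hx
  have := hpos x hx
  simpa [h] using this

theorem sigPos_eq_of_surj (Q : QuadraticForm ℝ E) (Q' : QuadraticForm ℝ E') (f : E →ₗ[ℝ] E')
    (h : ∀ x, Q' (f x) = Q x) (hf : Function.Surjective f) : (sigPos Q) = (sigPos Q') := by
  apply le_antisymm (sigPos_le_of_map Q Q' f h)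
  obtain ⟨g, hg⟩ := f.exists_rightInverse_of_surjective (LinearMap.range_eq_top.2 hf)
  apply sigPos_le_of_map Q' Q g
  intro x
  rw [← h, ← LinearMap.comp_apply, hg]
  rfl

/-- The signature as an integer. -/
noncomputable def sg (Q : QuadraticForm ℝ E) : ℤ := (sigPos Q : ℤ) - (sigNeg Q)

theorem sg_eq_of_surj (Q : QuadraticForm ℝ E) (Q' : QuadraticForm ℝ E') (f : E →ₗ[ℝ] E')
    (h : ∀ x, Q' (f x) = Q x) (hf : Function.Surjective f) : sg Q = sg Q' := by
  unfold sg
  rw [← sigPos_neg, ← sigPos_neg, sigPos_eq_of_surj Q Q' f h hf,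
    sigPos_eq_of_surj (-Q) (-Q') f (by simp [h]) hf]

theorem sigPos_prod_ge (Q : QuadraticForm ℝ E) (Q' : QuadraticForm ℝ E') :
    (sigPos Q) + (sigPos Q') ≤ sigPos (QuadraticMap.prod Q Q') := by
  obtain ⟨W, hW, hpos⟩ := exists_finrank_eq_sigPos_and_posDef Q
  obtain ⟨W', hW', hpos'⟩ := exists_finrank_eq_sigPos_and_posDef Q'
  rw [← hW, ← hW', ← Module.finrank_prod]
  apply finrank_le_sigPos _ (W.subtype.prodMap W'.subtype)
  rintro ⟨x, y⟩ hxy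
  have h1 : 0 ≤ Q x := by
    by_cases hx : x = 0
    · simp [hx]
    · exact (hpos x hx).le
  have h2 : 0 ≤ Q' y := by
    by_cases hx : y = 0
    · simp [hx]
    · exact (hpos' y hx).le
  by_cases hx : x = 0
  · have hy : y ≠ 0 := by
      rintro rfl
      exact hxy (by simp [hx])
    have : 0 < Q' y := hpos' y hy
    simp only [LinearMap.prodMap_apply, Submodule.subtype_apply, QuadraticMap.prod_apply]
    linarith
  · have : 0 < Q x := hpos x hx
    simp only [LinearMap.prodMap_apply, Submodule.subtype_apply, QuadraticMap.prod_apply]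
    linarith

theorem sg_prod (Q : QuadraticForm ℝ E) (Q' : QuadraticForm ℝ E') :
    sg (QuadraticMap.prod Q Q') = sg Q + sg Q' := by
  have h1 := sigPos_prod_ge Q Q'
  have h2 := sigPos_prod_ge (-Q) (-Q')
  have h3 : QuadraticMap.prod (-Q) (-Q') = - QuadraticMap.prod Q Q' := by
    ext x
    simp [add_comm]
  rw [h3] at h2
  simp only [sigPos_neg] at h2
  have e1 := QuadraticForm.sigPos_add_sigNeg_add_radical (Q := Q)
  have e2 := QuadraticForm.sigPos_add_sigNeg_add_radical (Q := Q')
  have e3 := QuadraticForm.sigPos_add_sigNeg_add_radical (Q := QuadraticMap.prod Q Q')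
  have h4 : Module.finrank ℝ Q.radical + Module.finrank ℝ Q'.radical ≤
      Module.finrank ℝ (QuadraticMap.prod Q Q').radical := by
    rw [← Module.finrank_prod]
    let f : (Q.radical × Q'.radical) →ₗ[ℝ] (QuadraticMap.prod Q Q').radical :=
      (Q.radical.subtype.prodMap Q'.radical.subtype).codRestrict _ (by
        rintro ⟨⟨x, hx⟩, ⟨y, hy⟩⟩
        rw [QuadraticMap.mem_radical_iff'] at hx hy ⊢
        simp [hx.1, hy.1, hx.2, hy.2])
    apply LinearMap.finrank_le_finrank_of_injective (f := f)
    rintro ⟨⟨x, hx⟩, ⟨y, hy⟩⟩ ⟨⟨x', hx'⟩, ⟨y', hy'⟩⟩ h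
    simpa [f, Subtype.ext_iff] using h
  rw [Module.finrank_prod] at e3
  unfold sg
  omega

theorem sigPos_le_restrict (Q : QuadraticForm ℝ E) (P : Submodule ℝ E) :
    (sigPos Q) + Module.finrank ℝ P ≤
      sigPos (Q.restrict P) + Module.finrank ℝ E := by
  obtain ⟨W, hW, hpos⟩ := exists_finrank_eq_sigPos_and_posDef Q
  have h1 := Submodule.finrank_sup_add_finrank_inf_eq W P
  have h2 := (W ⊔ P).finrank_le
  have h3 : Module.finrank ℝ (W ⊓ P : Submodule ℝ E) ≤ sigPos (Q.restrict P) := by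
    apply finrank_le_sigPos _ (Submodule.inclusion inf_le_right)
    rintro ⟨x, hx⟩ hne
    exact hpos ⟨x, hx.1⟩ (by simpa using hne)
  omega

/-- Restricting to the orthogonal of an isotropic subspace does not change the signature. -/
theorem sg_orthogonal (Q : QuadraticForm ℝ E) (K P : Submodule ℝ E) (hK : ∀ k ∈ K, Q k = 0)
    (hP : ∀ x, x ∈ P ↔ ∀ k ∈ K, QuadraticMap.polar Q k x = 0) :
    sg (Q.restrict P) = sg Q := by
  have hPe : P = LinearMap.BilinForm.orthogonal Q.polarBilin K := by
    ext x
    rw [hP, LinearMap.BilinForm.mem_orthogonal_iff]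
    rfl
  have c1 := LinearMap.BilinForm.finrank_add_finrank_orthogonal' (B := Q.polarBilin) K
  rw [← hPe, ← QuadraticMap.radical_eq_ker_polarBilin] at c1
  have p1 := sigPos_le_restrict Q P
  have p2 := sigPos_le_restrict (-Q) P
  have h3 : QuadraticMap.restrict (-Q) P = - Q.restrict P := by
    ext x
    simp
  rw [h3] at p2
  simp only [sigPos_neg] at p2
  have e1 := QuadraticForm.sigPos_add_sigNeg_add_radical (Q := Q)
  have e2 := QuadraticForm.sigPos_add_sigNeg_add_radical (Q := Q.restrict P)
  have hrad : ∀ r ∈ Q.radical, ∀ x, QuadraticMap.polar Q r x = 0 := by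
    intro r hr x
    rw [QuadraticMap.mem_radical_iff'] at hr
    simp [QuadraticMap.polar, hr.1, hr.2]
  have hle : K ⊔ Q.radical ≤ P := by
    apply sup_le
    · intro x hx
      rw [hP]
      intro k hk
      simp [QuadraticMap.polar, hK k hk, hK x hx, hK _ (K.add_mem hk hx)]
    · intro x hx
      rw [hP]
      intro k hk
      rw [QuadraticMap.polar_comm]
      exact hrad x hx k
  have c2 : Module.finrank ℝ (K ⊔ Q.radical : Submodule ℝ E) ≤
      Module.finrank ℝ (Q.restrict P).radical := by
    let f : (K ⊔ Q.radical : Submodule ℝ E) →ₗ[ℝ] (Q.restrict P).radical :=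
      (Submodule.inclusion hle).codRestrict _ (by
        rintro ⟨x, hx⟩
        rw [QuadraticMap.radical_eq_ker_polarBilin, LinearMap.mem_ker]
        ext ⟨y, hy⟩
        change QuadraticMap.polar Q x y = 0
        obtain ⟨k, hk, r, hr, rfl⟩ := Submodule.mem_sup.1 hx
        rw [QuadraticMap.polar_add_left, (hP y).1 hy k hk, hrad r hr, add_zero])
    apply LinearMap.finrank_le_finrank_of_injective (f := f)
    rintro ⟨x, hx⟩ ⟨x', hx'⟩ h
    simpa [f, Subtype.ext_iff] using h
  have c3 := Submodule.finrank_sup_add_finrank_inf_eq K Q.radical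
  unfold sg
  omega

end General

section Wall

variable {V : Type*} [AddCommGroup V] [Module ℝ V]

/-- Triples in `L₁ × L₂ × L₃` with zero sum. -/
def E3 (L₁ L₂ L₃ : Submodule ℝ V) : Submodule ℝ (V × V × V) where
  carrier := {x | x.1 ∈ L₁ ∧ x.2.1 ∈ L₂ ∧ x.2.2 ∈ L₃ ∧ x.1 + x.2.1 + x.2.2 = 0}
  zero_mem' := by simp
  add_mem' := by
    rintro ⟨a, b, c⟩ ⟨a', b', c'⟩ ⟨ha, hb, hc, h⟩ ⟨ha', hb', hc', h'⟩
    refine ⟨L₁.add_mem ha ha', L₂.add_mem hb hb', L₃.add_mem hc hc', ?_⟩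
    have : (a + b + c) + (a' + b' + c') = 0 := by
      dsimp only at h h'
      rw [h, h', add_zero]
    rw [← this]
    dsimp only [Prod.mk_add_mk]
    abel
  smul_mem' := by
    rintro r ⟨a, b, c⟩ ⟨ha, hb, hc, h⟩
    refine ⟨L₁.smul_mem r ha, L₂.smul_mem r hb, L₃.smul_mem r hc, ?_⟩
    dsimp only [Prod.smul_mk] at h ⊢
    rw [← smul_add, ← smul_add, h, smul_zero]

/-- Quadruples in `L₁ × L₂ × L₃ × L₄` with zero sum. -/
def E4 (L₁ L₂ L₃ L₄ : Submodule ℝ V) : Submodule ℝ (V × V × V × V) where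
  carrier := {x | x.1 ∈ L₁ ∧ x.2.1 ∈ L₂ ∧ x.2.2.1 ∈ L₃ ∧ x.2.2.2 ∈ L₄ ∧
    x.1 + x.2.1 + x.2.2.1 + x.2.2.2 = 0}
  zero_mem' := by simp
  add_mem' := by
    rintro ⟨a, b, c, d⟩ ⟨a', b', c', d'⟩ ⟨ha, hb, hc, hd, h⟩ ⟨ha', hb', hc', hd', h'⟩
    refine ⟨L₁.add_mem ha ha', L₂.add_mem hb hb', L₃.add_mem hc hc', L₄.add_mem hd hd', ?_⟩
    have : (a + b + c + d) + (a' + b' + c' + d') = 0 := by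
      dsimp only at h h'
      rw [h, h', add_zero]
    rw [← this]
    dsimp only [Prod.mk_add_mk]
    abel
  smul_mem' := by
    rintro r ⟨a, b, c, d⟩ ⟨ha, hb, hc, hd, h⟩
    refine ⟨L₁.smul_mem r ha, L₂.smul_mem r hb, L₃.smul_mem r hc, L₄.smul_mem r hd, ?_⟩
    dsimp only [Prod.smul_mk] at h ⊢
    rw [← smul_add, ← smul_add, ← smul_add, h, smul_zero]

/-- The Wall quadratic form on triples. -/
noncomputable def Q3 (ω : LinearMap.BilinForm ℝ V) (L₁ L₂ L₃ : Submodule ℝ V) :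
    QuadraticForm ℝ (E3 L₁ L₂ L₃) :=
  QuadraticMap.restrict (LinearMap.BilinMap.toQuadraticMap
    (ω.compl₁₂ (LinearMap.fst ℝ V (V × V)) (LinearMap.fst ℝ V V ∘ₗ LinearMap.snd ℝ V (V × V))))
    (E3 L₁ L₂ L₃)

/-- The quadratic form `ω(x₁, x₂) + ω(x₃, x₄)` on quadruples. -/
noncomputable def Q4 (ω : LinearMap.BilinForm ℝ V) (L₁ L₂ L₃ L₄ : Submodule ℝ V) :
    QuadraticForm ℝ (E4 L₁ L₂ L₃ L₄) :=
  QuadraticMap.restrict (LinearMap.BilinMap.toQuadraticMap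
    (ω.compl₁₂ (LinearMap.fst ℝ V (V × V × V))
      (LinearMap.fst ℝ V (V × V) ∘ₗ LinearMap.snd ℝ V (V × V × V)) +
    ω.compl₁₂ (LinearMap.fst ℝ V V ∘ₗ LinearMap.snd ℝ V (V × V) ∘ₗ LinearMap.snd ℝ V (V × V × V))
      (LinearMap.snd ℝ V V ∘ₗ LinearMap.snd ℝ V (V × V) ∘ₗ LinearMap.snd ℝ V (V × V × V))))
    (E4 L₁ L₂ L₃ L₄)

theorem Q3_apply (ω : LinearMap.BilinForm ℝ V) (L₁ L₂ L₃ : Submodule ℝ V)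
    (x : E3 L₁ L₂ L₃) : Q3 ω L₁ L₂ L₃ x = ω x.1.1 x.1.2.1 := rfl

theorem Q4_apply (ω : LinearMap.BilinForm ℝ V) (L₁ L₂ L₃ L₄ : Submodule ℝ V)
    (x : E4 L₁ L₂ L₃ L₄) :
    Q4 ω L₁ L₂ L₃ L₄ x = ω x.1.1 x.1.2.1 + ω x.1.2.2.1 x.1.2.2.2 := rfl

theorem Q3_neg (ω : LinearMap.BilinForm ℝ V) (L₁ L₂ L₃ : Submodule ℝ V) :
    Q3 (-ω) L₁ L₂ L₃ = - Q3 ω L₁ L₂ L₃ := by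
  ext x
  simp [Q3_apply]

/-- Isotropic subspaces. -/
def Iso (ω : LinearMap.BilinForm ℝ V) (L : Submodule ℝ V) : Prop :=
  ∀ x ∈ L, ∀ y ∈ L, ω x y = 0

theorem iso_of_lag {ω : LinearMap.BilinForm ℝ V} {L : Submodule ℝ V} (h : IsLagrangian ω L) :
    Iso ω L := by
  intro x hx y hy
  rw [← h, LinearMap.BilinForm.mem_orthogonal_iff] at hy
  exact hy x hx

theorem Iso.neg {ω : LinearMap.BilinForm ℝ V} {L : Submodule ℝ V} (h : Iso ω L) : Iso (-ω) L := by
  intro x hx y hy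
  simp [h x hx y hy]

theorem wallPsi_eq {ω : LinearMap.BilinForm ℝ V} {L₂ L₃ : Submodule ℝ V}
    (h₂ : Iso ω L₂) (h₃ : Iso ω L₃) {x y z : V} (hy : y ∈ L₂) (hz : z ∈ L₃)
    (h : x + y + z = 0) : wallPsi ω L₂ L₃ x x = ω x y := by
  have hex : ∃ q : V × V, q.1 ∈ L₂ ∧ q.2 ∈ L₃ ∧ x + q.1 + q.2 = 0 := ⟨(y, z), hy, hz, h⟩
  unfold wallPsi
  rw [dif_pos hex]
  obtain ⟨k2, k3, hk⟩ := hex.choose_spec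
  generalize hex.choose = q at *
  obtain ⟨u, v⟩ := q
  dsimp only at *
  have e1 : u - y = z - v := by
    have : (x + u + v) - (x + y + z) = 0 := by rw [hk, h, sub_zero]
    rw [← sub_eq_zero, ← this]
    abel
  have e2 : x = -y - z := by
    rw [← sub_eq_zero, ← h]
    abel
  have e3 : ω y (u - y) = 0 := h₂ _ hy _ (L₂.sub_mem k2 hy)
  have e4 : ω z (u - y) = 0 := by
    rw [e1]
    exact h₃ _ hz _ (L₃.sub_mem hz k3)
  have e5 : ω x (u - y) = 0 := by
    rw [e2, LinearMap.map_sub₂, LinearMap.map_neg₂, e3, e4]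
    simp
  rw [map_sub] at e5
  linarith

theorem wallPsi_neg (ω : LinearMap.BilinForm ℝ V) (L₂ L₃ : Submodule ℝ V) (x y : V) :
    wallPsi (-ω) L₂ L₃ x y = - wallPsi ω L₂ L₃ x y := by
  unfold wallPsi
  split_ifs <;> simp

theorem wallNegIndex_eq (ω : LinearMap.BilinForm ℝ V) (L₁ L₂ L₃ : Submodule ℝ V) :
    wallNegIndex ω L₁ L₂ L₃ = wallPosIndex (-ω) L₁ L₂ L₃ := by
  unfold wallNegIndex wallPosIndex
  simp only [wallPsi_neg, neg_pos]

variable [FiniteDimensional ℝ V]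

theorem wallPosIndex_eq {ω : LinearMap.BilinForm ℝ V} {L₁ L₂ L₃ : Submodule ℝ V}
    (h₂ : Iso ω L₂) (h₃ : Iso ω L₃) :
    wallPosIndex ω L₁ L₂ L₃ = sigPos (Q3 ω L₁ L₂ L₃) := by
  unfold wallPosIndex
  apply IsGreatest.csSup_eq
  let f : E3 L₁ L₂ L₃ →ₗ[ℝ] (L₁ ⊓ (L₂ ⊔ L₃) : Submodule ℝ V) :=
    (LinearMap.fst ℝ V (V × V) ∘ₗ (E3 L₁ L₂ L₃).subtype).codRestrict _ (by
      rintro ⟨⟨x, y, z⟩, hx, hy, hz, h⟩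
      refine ⟨hx, ?_⟩
      refine Submodule.mem_sup.2 ⟨-y, L₂.neg_mem hy, -z, L₃.neg_mem hz, ?_⟩
      dsimp only at h
      change -y + -z = x
      rw [← sub_eq_zero, ← neg_eq_zero, ← h]
      abel)
  have hval : ∀ e : E3 L₁ L₂ L₃, wallPsi ω L₂ L₃ (f e).1 (f e).1 = Q3 ω L₁ L₂ L₃ e := by
    rintro ⟨⟨x, y, z⟩, hx, hy, hz, h⟩
    exact wallPsi_eq h₂ h₃ hy hz h
  have hsurj : Function.Surjective f := by
    rintro ⟨x, hx, hx'⟩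
    obtain ⟨y, hy, z, hz, h⟩ := Submodule.mem_sup.1 hx'
    refine ⟨⟨⟨x, -y, -z⟩, hx, L₂.neg_mem hy, L₃.neg_mem hz, ?_⟩, rfl⟩
    dsimp only
    rw [← h]
    abel
  obtain ⟨g, hg⟩ := f.exists_rightInverse_of_surjective (LinearMap.range_eq_top.2 hsurj)
  have hg' : ∀ x, f (g x) = x := fun x => by
    rw [← LinearMap.comp_apply, hg]
    rfl
  constructor
  · obtain ⟨W, hW, hpos⟩ := exists_finrank_eq_sigPos_and_posDef (Q3 ω L₁ L₂ L₃)
    let F : W →ₗ[ℝ] V := (Submodule.subtype _) ∘ₗ f ∘ₗ W.subtype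
    have hF : ∀ w : W, wallPsi ω L₂ L₃ (F w) (F w) = Q3 ω L₁ L₂ L₃ w := fun w => hval _
    have hinj : Function.Injective F := by
      rw [injective_iff_map_eq_zero]
      intro w hw
      by_contra hne
      have h1 : 0 < Q3 ω L₁ L₂ L₃ w := hpos w hne
      rw [← hF, hw, wallPsi_eq h₂ h₃ L₂.zero_mem L₃.zero_mem (by simp)] at h1
      simp at h1
    refine ⟨LinearMap.range F, ?_, ?_, ?_⟩
    · rintro _ ⟨w, rfl⟩
      exact (f w.1).2
    · rw [LinearMap.finrank_range_of_inj hinj, hW]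
    · rintro _ ⟨w, rfl⟩ hne
      rw [hF]
      apply hpos w
      rintro rfl
      simp at hne
  · rintro _ ⟨W, hW, rfl, hpos⟩
    apply finrank_le_sigPos _ (g ∘ₗ Submodule.inclusion hW)
    intro x hx
    rw [← hval, LinearMap.comp_apply, hg']
    exact hpos x.1 x.2 (by simpa using hx)

theorem wallSignature_eq {ω : LinearMap.BilinForm ℝ V} {L₁ L₂ L₃ : Submodule ℝ V}
    (h₂ : Iso ω L₂) (h₃ : Iso ω L₃) :
    wallSignature ω L₁ L₂ L₃ = sg (Q3 ω L₁ L₂ L₃) := by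
  unfold wallSignature sg
  rw [wallNegIndex_eq, wallPosIndex_eq h₂ h₃, wallPosIndex_eq h₂.neg h₃.neg, Q3_neg, sigPos_neg]

/-- Cyclic invariance of the form on triples. -/
theorem sg_Q3_cyclic {ω : LinearMap.BilinForm ℝ V} (halt : ω.IsAlt) (L₁ L₂ L₃ : Submodule ℝ V) :
    sg (Q3 ω L₁ L₂ L₃) = sg (Q3 ω L₂ L₃ L₁) := by
  let f : E3 L₁ L₂ L₃ →ₗ[ℝ] E3 L₂ L₃ L₁ :=
    LinearMap.codRestrict _ (((LinearMap.fst ℝ V V ∘ₗ LinearMap.snd ℝ V (V × V)).prod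
      ((LinearMap.snd ℝ V V ∘ₗ LinearMap.snd ℝ V (V × V)).prod
        (LinearMap.fst ℝ V (V × V)))) ∘ₗ (E3 L₁ L₂ L₃).subtype) (by
      rintro ⟨⟨x, y, z⟩, hx, hy, hz, h⟩
      refine ⟨hy, hz, hx, ?_⟩
      change y + z + x = 0
      refine Eq.trans ?_ h
      change y + z + x = x + y + z
      abel)
  apply sg_eq_of_surj _ _ f
  · rintro ⟨⟨x, y, z⟩, hx, hy, hz, h⟩
    change ω y z = ω x y
    dsimp only at h
    have e2 : z = -x - y := by
      rw [← sub_eq_zero, ← h]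
      abel
    have := halt.neg_eq x y
    rw [e2]
    simp [halt.self_eq_zero, ← this]
  · rintro ⟨⟨x, y, z⟩, hx, hy, hz, h⟩
    refine ⟨⟨⟨z, x, y⟩, hz, hx, hy, ?_⟩, rfl⟩
    rw [← h]
    dsimp only
    abel

/-- Cyclic invariance of the form on quadruples. -/
theorem sg_Q4_cyclic {ω : LinearMap.BilinForm ℝ V} (halt : ω.IsAlt)
    (L₁ L₂ L₃ L₄ : Submodule ℝ V) :
    sg (Q4 ω L₁ L₂ L₃ L₄) = sg (Q4 ω L₂ L₃ L₄ L₁) := by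
  let f : E4 L₁ L₂ L₃ L₄ →ₗ[ℝ] E4 L₂ L₃ L₄ L₁ :=
    LinearMap.codRestrict _ (((LinearMap.snd ℝ V (V × V × V)).prod
      (LinearMap.fst ℝ V (V × V × V))) |> fun g =>
        (show (V × V × V) × V →ₗ[ℝ] V × V × V × V from
          { toFun := fun p => (p.1.1, p.1.2.1, p.1.2.2, p.2)
            map_add' := fun _ _ => rfl
            map_smul' := fun _ _ => rfl }) ∘ₗ g ∘ₗ (E4 L₁ L₂ L₃ L₄).subtype) (by
      rintro ⟨⟨x, y, z, w⟩, hx, hy, hz, hw, h⟩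
      refine ⟨hy, hz, hw, hx, ?_⟩
      change y + z + w + x = 0
      refine Eq.trans ?_ h
      change y + z + w + x = x + y + z + w
      abel)
  apply sg_eq_of_surj _ _ f
  · rintro ⟨⟨x, y, z, w⟩, hx, hy, hz, hw, h⟩
    change ω y z + ω w x = ω x y + ω z w
    dsimp only at h
    have e2 : w = -x - y - z := by
      rw [← sub_eq_zero, ← h]
      abel
    have h1 := halt.neg_eq x y
    have h2 := halt.neg_eq x z
    have h3 := halt.neg_eq y z
    rw [e2]
    simp only [map_sub, map_neg, LinearMap.sub_apply, LinearMap.neg_apply, halt.self_eq_zero]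
    linarith
  · rintro ⟨⟨x, y, z, w⟩, hx, hy, hz, hw, h⟩
    refine ⟨⟨⟨w, x, y, z⟩, hw, hx, hy, hz, ?_⟩, rfl⟩
    rw [← h]
    dsimp only
    abel

/-- Cutting the quadrilateral along the diagonal `13`. -/
theorem sg_Q4_eq {ω : LinearMap.BilinForm ℝ V} (halt : ω.IsAlt) (hnd : ω.Nondegenerate)
    {L₁ L₂ L₃ L₄ : Submodule ℝ V} (h₁ : IsLagrangian ω L₁) (h₃ : IsLagrangian ω L₃) :
    sg (Q4 ω L₁ L₂ L₃ L₄) = sg (Q3 ω L₁ L₂ L₃) + sg (Q3 ω L₁ L₃ L₄) := by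
  have i₁ := iso_of_lag h₁
  have i₃ := iso_of_lag h₃
  -- orthogonal of the intersection
  have horth : ∀ y, (∀ a, a ∈ L₁ → a ∈ L₃ → ω a y = 0) → y ∈ L₁ ⊔ L₃ := by
    intro y hy
    rw [← LinearMap.BilinForm.orthogonal_orthogonal hnd halt.isRefl (L₁ ⊔ L₃),
      LinearMap.BilinForm.mem_orthogonal_iff]
    intro a ha
    rw [LinearMap.BilinForm.mem_orthogonal_iff] at ha
    apply hy a
    · rw [← h₁, LinearMap.BilinForm.mem_orthogonal_iff]
      exact fun n hn => ha n (Submodule.mem_sup_left hn)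
    · rw [← h₃, LinearMap.BilinForm.mem_orthogonal_iff]
      exact fun n hn => ha n (Submodule.mem_sup_right hn)
  let j : (L₁ ⊓ L₃ : Submodule ℝ V) →ₗ[ℝ] E4 L₁ L₂ L₃ L₄ :=
    LinearMap.codRestrict _ ((Submodule.subtype _).prod
      ((0 : _ →ₗ[ℝ] V).prod ((-(Submodule.subtype _)).prod (0 : _ →ₗ[ℝ] V)))) (by
        rintro ⟨a, ha, ha'⟩
        refine ⟨ha, L₂.zero_mem, L₃.neg_mem ha', L₄.zero_mem, ?_⟩
        change a + 0 + -a + 0 = 0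
        abel)
  let K : Submodule ℝ (E4 L₁ L₂ L₃ L₄) := LinearMap.range j
  let c : E4 L₁ L₂ L₃ L₄ →ₗ[ℝ] V :=
    LinearMap.fst ℝ V (V × V) ∘ₗ LinearMap.snd ℝ V (V × V × V) ∘ₗ (E4 L₁ L₂ L₃ L₄).subtype
  let P : Submodule ℝ (E4 L₁ L₂ L₃ L₄) := (L₁ ⊔ L₃).comap c
  rw [← sg_orthogonal (Q4 ω L₁ L₂ L₃ L₄) K P, ← sg_prod]
  · symm
    let f : (E3 L₁ L₂ L₃ × E3 L₁ L₃ L₄) →ₗ[ℝ] P :=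
      { toFun := fun p => ⟨⟨(p.1.1.1 + p.2.1.1, p.1.1.2.1, p.1.1.2.2 + p.2.1.2.1, p.2.1.2.2), by
          obtain ⟨⟨⟨x, y, z⟩, hx, hy, hz, h⟩, ⟨⟨x', z', w'⟩, hx', hz', hw', h'⟩⟩ := p
          refine ⟨L₁.add_mem hx hx', hy, L₃.add_mem hz hz', hw', ?_⟩
          dsimp only at *
          have : (x + y + z) + (x' + z' + w') = 0 := by rw [h, h', add_zero]
          rw [← this]
          abel⟩, by
          obtain ⟨⟨⟨x, y, z⟩, hx, hy, hz, h⟩, ⟨⟨x', z', w'⟩, hx', hz', hw', h'⟩⟩ := p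
          change y ∈ L₁ ⊔ L₃
          refine Submodule.mem_sup.2 ⟨-x, L₁.neg_mem hx, -z, L₃.neg_mem hz, ?_⟩
          dsimp only at h
          rw [← sub_eq_zero, ← neg_eq_zero, ← h]
          abel⟩
        map_add' := fun p q => by
          apply Subtype.ext
          apply Subtype.ext
          simp only [Prod.fst_add, Prod.snd_add, Submodule.coe_add, Prod.mk_add_mk, Prod.mk.injEq,
            true_and, and_true]
          constructor <;> abel
        map_smul' := fun r q => by
          apply Subtype.ext
          apply Subtype.ext
          simp }
    apply sg_eq_of_surj _ _ f
    · rintro ⟨⟨⟨x, y, z⟩, hx, hy, hz, h⟩, ⟨⟨x', z', w'⟩, hx', hz', hw', h'⟩⟩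
      change ω (x + x') y + ω (z + z') w' = ω x y + ω x' z'
      dsimp only at *
      have ey : y = -x - z := by
        rw [← sub_eq_zero, ← h]
        abel
      have ew : w' = -x' - z' := by
        rw [← sub_eq_zero, ← h']
        abel
      have a1 := i₁ x hx x' hx'
      have a2 := i₁ x' hx' x hx
      have a3 := i₃ z hz z' hz'
      have a4 := halt.neg_eq x' z
      have a5 := halt.neg_eq x' z'
      rw [ey, ew]
      simp only [map_sub, map_neg, map_add, LinearMap.add_apply, halt.self_eq_zero]
      linarith
    · rintro ⟨⟨⟨x, y, z, w⟩, hx, hy, hz, hw, h⟩, hP⟩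
      change y ∈ L₁ ⊔ L₃ at hP
      obtain ⟨u, hu, v, hv, huv⟩ := Submodule.mem_sup.1 hP
      have h0 : x + y + z + w = 0 := h
      refine ⟨(⟨⟨-u, y, -v⟩, L₁.neg_mem hu, hy, L₃.neg_mem hv, ?_⟩,
        ⟨⟨x + u, z + v, w⟩, L₁.add_mem hx hu, L₃.add_mem hz hv, hw, ?_⟩), ?_⟩
      · dsimp only
        rw [← huv]
        abel
      · dsimp only
        rw [← h0, ← huv]
        abel
      · apply Subtype.ext
        apply Subtype.ext
        simp [f]
  · rintro _ ⟨a, rfl⟩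
    simp [Q4_apply, j]
  · rintro ⟨⟨x, y, z, w⟩, hx, hy, hz, hw, h⟩
    have hpol : ∀ a : (L₁ ⊓ L₃ : Submodule ℝ V),
        QuadraticMap.polar (Q4 ω L₁ L₂ L₃ L₄) (j a) ⟨⟨x, y, z, w⟩, hx, hy, hz, hw, h⟩ =
          2 * ω a.1 y := by
      rintro ⟨a, ha, ha'⟩
      change (ω (a + x) (0 + y) + ω (-a + z) (0 + w)) - (ω a 0 + ω (-a) 0) - (ω x y + ω z w) =
        2 * ω a y
      dsimp only at *
      have ew : w = -x - y - z := by
        rw [← sub_eq_zero, ← h]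
        abel
      have a1 := i₁ a ha x hx
      have a2 := i₃ a ha' z hz
      rw [ew]
      simp only [map_sub, map_neg, map_add, LinearMap.add_apply, LinearMap.neg_apply, map_zero,
        zero_add]
      linarith
    change y ∈ L₁ ⊔ L₃ ↔ _
    constructor
    · rintro hyy _ ⟨a, rfl⟩
      rw [hpol]
      obtain ⟨u, hu, v, hv, rfl⟩ := Submodule.mem_sup.1 hyy
      rw [map_add, i₁ _ a.2.1 _ hu, i₃ _ a.2.2 _ hv]
      simp
    · intro hk
      apply horth
      intro a ha ha'
      have := hk _ ⟨⟨a, ha, ha'⟩, rfl⟩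
      rw [hpol] at this
      simpa using this

end Wall

end WallAux

/-- **Cocycle identity for Wall signatures (Maslov triple index).**
For Lagrangian subspaces `L₁, L₂, L₃, L₄` of a symplectic vector space `(V, ω)`,
`σ(V; L₁, L₂, L₃) + σ(V; L₁, L₃, L₄) = σ(V; L₁, L₂, L₄) + σ(V; L₂, L₃, L₄)`. -/
theorem wall_signature_cocycle
    {V : Type*} [AddCommGroup V] [Module ℝ V] [FiniteDimensional ℝ V]
    (ω : LinearMap.BilinForm ℝ V) (halt : ω.IsAlt) (hnd : ω.Nondegenerate)
    (L₁ L₂ L₃ L₄ : Submodule ℝ V)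
    (h₁ : IsLagrangian ω L₁) (h₂ : IsLagrangian ω L₂)
    (h₃ : IsLagrangian ω L₃) (h₄ : IsLagrangian ω L₄) :
    wallSignature ω L₁ L₂ L₃ + wallSignature ω L₁ L₃ L₄ =
      wallSignature ω L₁ L₂ L₄ + wallSignature ω L₂ L₃ L₄ := by
  have i₁ := WallAux.iso_of_lag h₁
  have i₂ := WallAux.iso_of_lag h₂
  have i₃ := WallAux.iso_of_lag h₃
  have i₄ := WallAux.iso_of_lag h₄
  rw [WallAux.wallSignature_eq i₂ i₃, WallAux.wallSignature_eq i₃ i₄,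
    WallAux.wallSignature_eq i₂ i₄, WallAux.wallSignature_eq i₃ i₄,
    ← WallAux.sg_Q4_eq halt hnd h₁ h₃, WallAux.sg_Q4_cyclic halt,
    WallAux.sg_Q4_eq halt hnd h₂ h₄, WallAux.sg_Q3_cyclic halt L₁ L₂ L₄, add_comm]
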